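/- Let d ≥ 3, fix k ∈ {0,…,d−1}, and let w be the middle component of f^k(T_{d−1−k}). If k = d−1, then w = (d−1)F_{d−1}(d−1), w has exactly two left and two right extensions in u_d, B := w·φ^{d−1}(0) is a complete return word to w in u_d, and every complete return word R to w in u_d satisfies R⃗ ≥ B⃗ componentwise. If k < d−1, then w = F_k(d−1), w has exactly two left and two right extensions in u_d, both A := φ^k(d−1)·w and B := w·φ^{d−1}(0) are complete return words to w in u_d, and every complete return word R to w in u_d satisfies R⃗ ≥ A⃗ or R⃗ ≥ B⃗ componentwise. -/

import Mathlib

namespace RichRT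

variable {A : Type*}

/-- The word `w` occurs in the sequence `u` at position `j`. -/
def OccursAt (w : List A) (u : ℕ → A) (j : ℕ) : Prop :=
  w = (List.range w.length).map fun t => u (j + t)

/-- `w` is a factor of the infinite sequence `u`. -/
def IsFactorS (w : List A) (u : ℕ → A) : Prop :=
  ∃ j : ℕ, OccursAt w u j

/-- `u` is recurrent: every factor occurs infinitely often. -/
def Recurrent (u : ℕ → A) : Prop :=
  ∀ w : List A, IsFactorS w u → ∀ N : ℕ, ∃ j, N ≤ j ∧ OccursAt w u j

/-- The number of distinct palindromic factors of a finite word. -/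
noncomputable def palCount (w : List A) : ℕ :=
  Set.ncard {p : List A | p <:+: w ∧ p.reverse = p}

/-- A finite word of length `n` is rich if it has exactly `n+1` palindromic factors. -/
def RichWord (w : List A) : Prop := palCount w = w.length + 1

/-- A sequence is rich if all its factors are rich. -/
def RichSeq (u : ℕ → A) : Prop := ∀ w : List A, IsFactorS w u → RichWord w

/-- The prefix of length `k` of the periodic sequence `vvv⋯`. -/
def powPref (v : List A) (k : ℕ) : List A := ((List.replicate k v).flatten).take k

/-- The set of exponents `k/|v|` of fractional powers `v^(k/|v|)` occurring in `u`,
with `|v| ≥ n`. -/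
def expSet (u : ℕ → A) (n : ℕ) : Set ℝ :=
  {x | ∃ (v : List A) (k : ℕ), v ≠ [] ∧ n ≤ v.length ∧
    IsFactorS (powPref v k) u ∧ x = (k : ℝ) / (v.length : ℝ)}

/-- The critical exponent of a sequence, with values in `EReal`. -/
noncomputable def critExp (u : ℕ → A) : EReal :=
  sSup ((fun x : ℝ => (x : EReal)) '' expSet u 0)

/-- The asymptotic critical exponent of a sequence: `⊤` if the critical exponent is `⊤`,
otherwise the limit (= infimum, by monotonicity) over `n` of the suprema of exponents of
powers `v^e` with `|v| ≥ n`. -/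
noncomputable def acritExp (u : ℕ → A) : EReal :=
  if critExp u = ⊤ then ⊤
  else ⨅ n : ℕ, sSup ((fun x : ℝ => (x : EReal)) '' expSet u n)

/-- The morphism `φ_d` on letters: `i ↦ 0(i+1)` for `i < d-1`, `d-1 ↦ 0(d-1)(d-1)`. -/
def phiL (d : ℕ) (i : ℕ) : List ℕ :=
  if i < d - 1 then [0, i + 1] else [0, d - 1, d - 1]

/-- The morphism `φ_d` on words. -/
def phiW (d : ℕ) (w : List ℕ) : List ℕ := w.flatMap (phiL d)

/-- `u` is the fixed point of `φ_d`: it begins with `0` and `φ_d(u) = u`, i.e. the image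
of every prefix of `u` is again a prefix of `u`. -/
def IsPhiFixed (d : ℕ) (u : ℕ → ℕ) : Prop :=
  u 0 = 0 ∧ ∀ m : ℕ, OccursAt (phiW d ((List.range m).map u)) u 0

/-- Left extensions of `w` in `u`. -/
def Lext (u : ℕ → ℕ) (w : List ℕ) : Set (List ℕ) :=
  {x | ∃ i : ℕ, x = i :: w ∧ IsFactorS x u}

/-- Right extensions of `w` in `u`. -/
def Rext (u : ℕ → ℕ) (w : List ℕ) : Set (List ℕ) :=
  {x | ∃ i : ℕ, x = w ++ [i] ∧ IsFactorS x u}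

/-- Both-sided extensions of `w` in `u`. -/
def Bext (u : ℕ → ℕ) (w : List ℕ) : Set (List ℕ) :=
  {x | ∃ i j : ℕ, x = i :: (w ++ [j]) ∧ IsFactorS x u}

/-- `w` is a bispecial factor of `u`. -/
def Bispecial (u : ℕ → ℕ) (w : List ℕ) : Prop :=
  IsFactorS w u ∧ 2 ≤ (Lext u w).ncard ∧ 2 ≤ (Rext u w).ncard

/-- The bilateral order `b(w) = #Bext(w) − #Lext(w) − #Rext(w) + 1`. -/
noncomputable def bord (u : ℕ → ℕ) (w : List ℕ) : ℤ :=
  ((Bext u w).ncard : ℤ) - ((Lext u w).ncard : ℤ) - ((Rext u w).ncard : ℤ) + 1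

/-- The palindromes `F_0 = ε`, `F_i = φ(F_{i-1})0`. -/
def Fword (d : ℕ) : ℕ → List ℕ
  | 0 => []
  | i + 1 => phiW d (Fword d i) ++ [0]

/-- Membership in the set `𝒯` of bispecial triplets. -/
def TripleMem (d : ℕ) (u : ℕ → ℕ) (t : ℕ × List ℕ × ℕ) : Prop :=
  Bispecial u t.2.1 ∧ t.1 < d - 1 ∧ t.2.2 < d - 1 ∧
    IsFactorS (t.1 :: t.2.1) u ∧ IsFactorS (t.2.1 ++ [t.2.2]) u

/-- The map `f` on triplets. -/
def fmap (d : ℕ) (t : ℕ × List ℕ × ℕ) : ℕ × List ℕ × ℕ :=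
  ((t.1 + 1) % (d - 1),
   (if t.1 = d - 2 then [d - 1] else []) ++ phiW d t.2.1 ++ [0] ++
     (if t.2.2 = d - 2 then [d - 1] else []),
   (t.2.2 + 1) % (d - 1))

/-- The initial triplets `T_k = (0, ε, k)` for `k ≤ d-2` and `T_{d-1} = (0, d-1, 0)`. -/
def Tinit (d k : ℕ) : ℕ × List ℕ × ℕ :=
  if k = d - 1 then (0, [d - 1], 0) else (0, ([] : List ℕ), k)

/-- The Parikh vector of a word. -/
def parikh (d : ℕ) (w : List ℕ) : Fin d → ℕ := fun i => w.count (i : ℕ)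

/-- The incidence matrix of `φ_d`. -/
def Mmat (d : ℕ) : Matrix (Fin d) (Fin d) ℕ := fun i j => (phiL d (j : ℕ)).count (i : ℕ)

/-- `r` is a return word to `w` in `u`. -/
def ReturnWord (u : ℕ → ℕ) (w r : List ℕ) : Prop :=
  ∃ j ℓ : ℕ, j < ℓ ∧ OccursAt w u j ∧ OccursAt w u ℓ ∧
    (∀ m, j < m → m < ℓ → ¬ OccursAt w u m) ∧
    r = (List.range (ℓ - j)).map fun t => u (j + t)

/-- `R` is a complete return word to `w` in `u`. -/
def CompleteReturn (u : ℕ → ℕ) (w R : List ℕ) : Prop :=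
  ∃ r : List ℕ, ReturnWord u w r ∧ R = r ++ w

/-- The slice `u_a ⋯ u_{b-1}`. -/
def sl (u : ℕ → ℕ) (a b : ℕ) : List ℕ := (List.range (b - a)).map fun t => u (a + t)

lemma sl_length (u : ℕ → ℕ) (a b : ℕ) : (sl u a b).length = b - a := by simp [sl]

lemma sl_append (u : ℕ → ℕ) {a b c : ℕ} (h1 : a ≤ b) (h2 : b ≤ c) :
    sl u a c = sl u a b ++ sl u b c := by
  obtain ⟨m, rfl⟩ := Nat.exists_eq_add_of_le h1
  obtain ⟨n, rfl⟩ := Nat.exists_eq_add_of_le h2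
  have e1 : a + m + n - a = m + n := by omega
  have e2 : a + m - a = m := by omega
  have e3 : a + m + n - (a + m) = n := by omega
  simp only [sl, e1, e2, e3, List.range_add, List.map_append, List.map_map]
  congr 1
  apply List.map_congr_left
  intro t _
  simp [add_assoc]

lemma sl_self (u : ℕ → ℕ) (a : ℕ) : sl u a a = [] := by simp [sl]

lemma sl_one (u : ℕ → ℕ) (a : ℕ) : sl u a (a + 1) = [u a] := by simp [sl]

lemma sl_succ (u : ℕ → ℕ) {a b : ℕ} (h : a ≤ b) : sl u a (b + 1) = sl u a b ++ [u b] := by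
  rw [sl_append u h (Nat.le_succ b), ← sl_one]

lemma sl_cons (u : ℕ → ℕ) {a b : ℕ} (h : a < b) : sl u a b = u a :: sl u (a + 1) b := by
  rw [sl_append u (Nat.le_succ a) h, Nat.succ_eq_add_one, sl_one]; rfl

lemma occ_iff (u : ℕ → ℕ) (w : List ℕ) (p : ℕ) : OccursAt w u p ↔ w = sl u p (p + w.length) := by
  simp [OccursAt, sl]

lemma occ_of_sl (u : ℕ → ℕ) {w : List ℕ} {p b : ℕ} (h : w = sl u p b) : OccursAt w u p := by
  have : w.length = b - p := by rw [h, sl_length]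
  rw [OccursAt, this]; exact h

lemma occ_append (u : ℕ → ℕ) (v w : List ℕ) (p : ℕ) :
    OccursAt (v ++ w) u p ↔ OccursAt v u p ∧ OccursAt w u (p + v.length) := by
  simp only [occ_iff]
  rw [List.length_append, sl_append u (Nat.le_add_right p v.length)
    (by omega : p + v.length ≤ p + (v.length + w.length))]
  constructor
  · intro h
    have h' := List.append_inj h (by simp [sl_length])
    simpa [add_assoc] using h'
  · rintro ⟨h1, h2⟩
    rw [add_assoc] at h2
    rw [← h1, ← h2]

lemma occ_single (u : ℕ → ℕ) (c p : ℕ) : OccursAt [c] u p ↔ u p = c := by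
  rw [occ_iff]; simp [sl_one, eq_comm]

lemma occ_cons (u : ℕ → ℕ) (c : ℕ) (w : List ℕ) (p : ℕ) :
    OccursAt (c :: w) u p ↔ u p = c ∧ OccursAt w u (p + 1) := by
  have := occ_append u [c] w p
  simpa [occ_single] using this

lemma occ_nil (u : ℕ → ℕ) (p : ℕ) : OccursAt [] u p := by simp [OccursAt]

/-- Position of the image of the letter at position `n`. -/
def P (d : ℕ) (u : ℕ → ℕ) (n : ℕ) : ℕ := (phiW d (sl u 0 n)).length

lemma phiW_append (d : ℕ) (v w : List ℕ) : phiW d (v ++ w) = phiW d v ++ phiW d w := by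
  simp [phiW]

lemma phiW_nil (d : ℕ) : phiW d [] = [] := by simp [phiW]

lemma phiW_single (d c : ℕ) : phiW d [c] = phiL d c := by simp [phiW]

lemma phiW_iter_append (d k : ℕ) (v w : List ℕ) :
    (phiW d)^[k] (v ++ w) = (phiW d)^[k] v ++ (phiW d)^[k] w := by
  induction k with
  | zero => rfl
  | succ k ih => rw [Function.iterate_succ_apply', ih, phiW_append]; simp only [Function.iterate_succ_apply']

lemma phiW_iter_cons (d k a : ℕ) (w : List ℕ) :
    (phiW d)^[k] (a :: w) = (phiW d)^[k] [a] ++ (phiW d)^[k] w := by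
  rw [← phiW_iter_append]; rfl

lemma Fword_letters (d : ℕ) (k : ℕ) (hk : k ≤ d - 1) : ∀ a ∈ Fword d k, a < k := by
  induction k with
  | zero => simp [Fword]
  | succ k ih =>
    intro a ha
    simp only [Fword, phiW, List.mem_append, List.mem_flatMap, List.mem_singleton] at ha
    rcases ha with ⟨b, hb, hab⟩ | rfl
    · have := ih (by omega) b hb
      rw [phiL, if_pos (by omega)] at hab
      simp at hab
      omega
    · omega

lemma phi_iter_single (d c k : ℕ) (h : c + k ≤ d - 1) :
    (phiW d)^[k] [c] = Fword d k ++ [c + k] := by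
  induction k with
  | zero => rfl
  | succ k ih =>
    rw [Function.iterate_succ_apply', ih (by omega), phiW_append, phiW_single, phiL,
      if_pos (by omega), Fword]
    simp [add_assoc]

section
variable {d : ℕ} {u : ℕ → ℕ}

lemma P_zero : P d u 0 = 0 := by simp [P, sl_self, phiW_nil]

lemma P_succ (n : ℕ) : P d u (n + 1) = P d u n + (phiL d (u n)).length := by
  simp [P, sl_succ, phiW_append, phiW_single]

lemma P_succ_lt {n : ℕ} (h : u n < d - 1) : P d u (n + 1) = P d u n + 2 := by
  simp [P_succ, phiL, h]

lemma P_succ_ge {n : ℕ} (h : ¬ u n < d - 1) : P d u (n + 1) = P d u n + 3 := by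
  simp [P_succ, phiL, h]

lemma P_succ_two (n : ℕ) : P d u n + 2 ≤ P d u (n + 1) := by
  by_cases h : u n < d - 1
  · rw [P_succ_lt h]
  · rw [P_succ_ge h]; omega

lemma P_mono : StrictMono (P d u) := by
  apply strictMono_nat_of_lt_succ
  intro n; have := P_succ_two (d := d) (u := u) n; omega

lemma Pk_mono (k : ℕ) : StrictMono (P d u)^[k] := P_mono.iterate k

lemma phiL_sl (hu : IsPhiFixed d u) (n : ℕ) : phiL d (u n) = sl u (P d u n) (P d u (n + 1)) := by
  have key : ∀ m, phiW d (sl u 0 m) = sl u 0 (P d u m) := by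
    intro m
    have := hu.2 m
    have e : (List.range m).map u = sl u 0 m := by simp [sl]
    rw [e, occ_iff, zero_add] at this
    exact this
  have h := key (n + 1)
  rw [sl_succ u (Nat.zero_le _), phiW_append, phiW_single, key n,
    sl_append u (Nat.zero_le _) (P_mono (Nat.lt_succ_self n)).le] at h
  exact List.append_cancel_left h

lemma phiW_sl (hu : IsPhiFixed d u) {a b : ℕ} (h : a ≤ b) :
    phiW d (sl u a b) = sl u (P d u a) (P d u b) := by
  induction b, h using Nat.le_induction with
  | base => simp [sl_self, phiW_nil]
  | succ b h ih =>
    rw [sl_succ u h, phiW_append, phiW_single, ih, phiL_sl hu,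
      ← sl_append u (P_mono.monotone h) (P_mono (Nat.lt_succ_self b)).le]

lemma phiWk_sl (hu : IsPhiFixed d u) (k : ℕ) {a b : ℕ} (h : a ≤ b) :
    (phiW d)^[k] (sl u a b) = sl u ((P d u)^[k] a) ((P d u)^[k] b) := by
  induction k with
  | zero => rfl
  | succ k ih =>
    simp only [Function.iterate_succ_apply']
    rw [ih, phiW_sl hu ((Pk_mono k).monotone h)]

lemma u_P (hu : IsPhiFixed d u) (n : ℕ) : u (P d u n) = 0 := by
  have h := phiL_sl hu n
  rw [sl_cons u (P_mono (Nat.lt_succ_self n))] at h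
  unfold phiL at h
  split_ifs at h <;> simp at h <;> omega

lemma u_P1 (hu : IsPhiFixed d u) (n : ℕ) : u (P d u n + 1) = min (u n + 1) (d - 1) := by
  have h := phiL_sl hu n
  have h2 := P_succ_two (d := d) (u := u) n
  rw [sl_cons u (by omega), sl_cons u (by omega)] at h
  unfold phiL at h
  split_ifs at h <;> simp at h <;> omega

lemma u_P2 (hu : IsPhiFixed d u) (n : ℕ) (hn : ¬ u n < d - 1) : u (P d u n + 2) = d - 1 := by
  have h := phiL_sl hu n
  rw [P_succ_ge hn, sl_cons u (by omega), sl_cons u (by omega), sl_cons u (by omega)] at h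
  rw [phiL, if_neg hn] at h
  simp only [List.cons.injEq] at h
  exact h.2.2.1.symm

lemma pos_cases (hu : IsPhiFixed d u) (p : ℕ) : ∃ q, p = P d u q ∨ p = P d u q + 1 ∨
    (p = P d u q + 2 ∧ ¬ u q < d - 1) := by
  induction p with
  | zero => exact ⟨0, Or.inl P_zero.symm⟩
  | succ p ih =>
    obtain ⟨q, h | h | ⟨h, h'⟩⟩ := ih
    · exact ⟨q, by omega⟩
    · by_cases hq : u q < d - 1
      · exact ⟨q + 1, Or.inl (by rw [P_succ_lt hq]; omega)⟩
      · exact ⟨q, by omega⟩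
    · exact ⟨q + 1, Or.inl (by rw [P_succ_ge h']; omega)⟩

lemma u_le (hu : IsPhiFixed d u) (p : ℕ) : u p ≤ d - 1 := by
  obtain ⟨q, rfl | rfl | ⟨rfl, h⟩⟩ := pos_cases hu p
  · rw [u_P hu]; omega
  · rw [u_P1 hu]; omega
  · rw [u_P2 hu _ h]

lemma P_of_zero (hd : 3 ≤ d) (hu : IsPhiFixed d u) {p : ℕ} (h : u p = 0) : ∃ q, p = P d u q := by
  obtain ⟨q, rfl | rfl | ⟨rfl, h'⟩⟩ := pos_cases hu p
  · exact ⟨q, rfl⟩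
  · rw [u_P1 hu] at h; omega
  · rw [u_P2 hu _ h'] at h; omega

/-- A letter before a nonzero one. -/
lemma prev_letter (hd : 3 ≤ d) (hu : IsPhiFixed d u) {p : ℕ} (h : u (p + 1) ≠ 0) :
    u p = 0 ∨ u p = d - 1 := by
  obtain ⟨q, h1 | h1 | ⟨h1, h'⟩⟩ := pos_cases hu (p + 1)
  · rw [h1, u_P hu] at h; omega
  · obtain rfl : p = P d u q := by omega
    exact Or.inl (u_P hu q)
  · obtain rfl : p = P d u q + 1 := by omega
    right; rw [u_P1 hu]; have := u_le hu q; omega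

/-- A letter after a nonzero one. -/
lemma next_letter (hd : 3 ≤ d) (hu : IsPhiFixed d u) {p : ℕ} (h : u p ≠ 0) :
    u (p + 1) = 0 ∨ u (p + 1) = d - 1 := by
  obtain ⟨q, rfl | rfl | ⟨rfl, h'⟩⟩ := pos_cases hu p
  · exact absurd (u_P hu q) h
  · by_cases hq : u q < d - 1
    · left; have := u_P hu (q + 1); rwa [P_succ_lt hq] at this
    · right; exact u_P2 hu q hq
  · left; have := u_P hu (q + 1); rwa [P_succ_ge h'] at this

/-- `F_k` occurs at the beginning of each block. -/
lemma F_occ (hu : IsPhiFixed d u) (k n : ℕ) :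
    OccursAt (Fword d k) u ((P d u)^[k] n) ∧
    u ((P d u)^[k] n + (Fword d k).length) = min (u n + k) (d - 1) ∧
    (P d u)^[k] n + (Fword d k).length < (P d u)^[k] (n + 1) := by
  induction k with
  | zero =>
    have := u_le hu n
    refine ⟨occ_nil _ _, ?_, ?_⟩ <;> simp [Fword]
    omega
  | succ k ih =>
    obtain ⟨h1, h2, h3⟩ := ih
    set m := (P d u)^[k] n + (Fword d k).length with hm
    have hle : (P d u)^[k] n ≤ m := by omega
    have hP := P_mono (d := d) (u := u).monotone hle
    have e : Fword d (k + 1) = sl u ((P d u)^[k + 1] n) (P d u m + 1) := by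
      rw [Fword, (occ_iff _ _ _).1 h1, ← hm, phiW_sl hu hle, Function.iterate_succ_apply',
        sl_succ u hP, u_P hu]
    have e2 : (P d u)^[k + 1] n + (Fword d (k + 1)).length = P d u m + 1 := by
      rw [e, sl_length, Function.iterate_succ_apply']; omega
    refine ⟨occ_of_sl u e, ?_, ?_⟩
    · rw [e2, u_P1 hu, h2]; omega
    · rw [e2, Function.iterate_succ_apply']
      have a1 := P_succ_two (d := d) (u := u) m
      have a2 := P_mono (d := d) (u := u).monotone (Nat.succ_le_of_lt h3)
      simp only [Nat.succ_eq_add_one] at a2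
      omega

lemma phiW_head (v : List ℕ) : ∃ t, phiW d v ++ [0] = 0 :: t := by
  cases v with
  | nil => exact ⟨[], rfl⟩
  | cons a v =>
    simp only [phiW, List.flatMap_cons, phiL]
    split_ifs <;> simp

lemma decode (hd : 3 ≤ d) (hu : IsPhiFixed d u) (v : List ℕ) (hv : ∀ a ∈ v, a ≤ d - 1) (q : ℕ)
    (h : OccursAt (phiW d v ++ [0]) u (P d u q)) :
    OccursAt v u q ∧ P d u q + (phiW d v).length = P d u (q + v.length) := by
  induction v generalizing q with
  | nil => exact ⟨occ_nil _ _, by simp [phiW_nil]⟩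
  | cons a v ih =>
    have ea : phiW d (a :: v) = phiL d a ++ phiW d v := by simp [phiW]
    rw [ea, List.append_assoc, occ_append] at h
    obtain ⟨ha, hr⟩ := h
    obtain ⟨t, ht⟩ := phiW_head (d := d) v
    have hz : u (P d u q + (phiL d a).length) = 0 := by
      have := hr
      rw [ht, occ_cons] at this
      exact this.1
    have haq : u q = a := by
      have hle := hv a (by simp)
      have hq := u_le hu q
      have h1 := u_P1 hu q
      have h2 := u_P2 hu q
      unfold phiL at ha hz
      split_ifs at ha hz with hc
      · simp [occ_cons] at ha hz
        by_cases hq2 : u q < d - 1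
        · omega
        · have := h2 hq2; omega
      · simp [occ_cons] at ha hz
        by_cases hq2 : u q < d - 1
        · have h3 := u_P hu (q + 1)
          rw [P_succ_lt hq2] at h3
          have : u (P d u q + 2) = d - 1 := by simpa [add_assoc] using ha.2.2.1
          omega
        · omega
    have hP : P d u q + (phiL d a).length = P d u (q + 1) := by rw [P_succ, haq]
    rw [hP] at hr
    obtain ⟨g1, g2⟩ := ih (fun b hb => hv b (by simp [hb])) (q + 1) hr
    refine ⟨(occ_cons _ _ _ _).2 ⟨haq, g1⟩, ?_⟩
    rw [ea, List.length_append, ← add_assoc, hP, g2, List.length_cons]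
    congr 1; omega

lemma F_conv (hd : 3 ≤ d) (hu : IsPhiFixed d u) (k : ℕ) (hk : k ≤ d - 1) (p : ℕ)
    (h : OccursAt (Fword d k) u p) (h2 : k ≤ u (p + (Fword d k).length)) :
    ∃ n, p = (P d u)^[k] n := by
  induction k generalizing p with
  | zero => exact ⟨p, rfl⟩
  | succ k ih =>
    rw [Fword] at h h2
    obtain ⟨t, ht⟩ := phiW_head (d := d) (Fword d k)
    have hz : u p = 0 := by
      have := h
      rw [ht, occ_cons] at this
      exact this.1
    obtain ⟨q, rfl⟩ := P_of_zero hd hu hz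
    have hl := Fword_letters d k (by omega)
    obtain ⟨g1, g2⟩ := decode hd hu _ (fun a ha => by have := hl a ha; omega) q h
    rw [List.length_append, ← add_assoc, g2, List.length_singleton, u_P1 hu] at h2
    obtain ⟨n, hn⟩ := ih (by omega) q g1 (by omega)
    exact ⟨n, by rw [Function.iterate_succ_apply', hn]⟩

lemma occ_w (hd : 3 ≤ d) (hu : IsPhiFixed d u) (k : ℕ) (hk : k ≤ d - 1) (p : ℕ) :
    OccursAt (Fword d k ++ [d - 1]) u p ↔ ∃ n, p = (P d u)^[k] n ∧ d - 1 ≤ u n + k := by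
  rw [occ_append, occ_single]
  constructor
  · rintro ⟨h1, h2⟩
    obtain ⟨n, rfl⟩ := F_conv hd hu k hk p h1 (by omega)
    have := (F_occ hu k n).2.1
    exact ⟨n, rfl, by omega⟩
  · rintro ⟨n, rfl, hn⟩
    obtain ⟨h1, h2, _⟩ := F_occ hu k n
    exact ⟨h1, by omega⟩

/-- Last letter of a block. -/
lemma last_letter (hu : IsPhiFixed d u) (k n : ℕ) :
    ∃ m, (P d u)^[k] (n + 1) = m + 1 ∧ u m = min (u n + k) (d - 1) := by
  induction k with
  | zero => exact ⟨n, rfl, by have := u_le hu n; simp; omega⟩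
  | succ k ih =>
    obtain ⟨m, h1, h2⟩ := ih
    rw [Function.iterate_succ_apply', h1]
    by_cases hm : u m < d - 1
    · exact ⟨P d u m + 1, by rw [P_succ_lt hm], by rw [u_P1 hu]; omega⟩
    · exact ⟨P d u m + 2, by rw [P_succ_ge hm], by rw [u_P2 hu m hm]; omega⟩

lemma block_start (hu : IsPhiFixed d u) (J n : ℕ) (h1 : J ≤ u n) (h2 : u n < d - 1) :
    ∃ m, n + 1 = (P d u)^[J] m := by
  induction J generalizing n with
  | zero => exact ⟨n + 1, rfl⟩
  | succ J ih =>
    obtain ⟨q, rfl | rfl | ⟨rfl, h'⟩⟩ := pos_cases hu n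
    · rw [u_P hu] at h1; omega
    · rw [u_P1 hu] at h1 h2
      obtain ⟨m, hm⟩ := ih q (by omega) (by omega)
      exact ⟨m, by rw [Function.iterate_succ_apply', ← hm, P_succ_lt (by omega)]⟩
    · rw [u_P2 hu _ h'] at h2; omega

lemma occ_w' (hd : 3 ≤ d) (hu : IsPhiFixed d u) (p : ℕ) :
    OccursAt ((d - 1) :: (Fword d (d - 1) ++ [d - 1])) u p ↔
      ∃ n, p + 1 = (P d u)^[d - 1] (n + 1) := by
  rw [occ_cons, occ_w hd hu _ le_rfl]
  constructor
  · rintro ⟨_, n, hn, _⟩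
    cases n with
    | zero =>
      have : (P d u)^[d - 1] 0 = 0 := Function.iterate_fixed P_zero _
      omega
    | succ n => exact ⟨n, hn⟩
  · rintro ⟨n, hn⟩
    obtain ⟨m, h1, h2⟩ := last_letter hu (d - 1) n
    obtain rfl : p = m := by omega
    exact ⟨by omega, n + 1, hn, by omega⟩

lemma exists_letter (hu : IsPhiFixed d u) (c : ℕ) (hc : c ≤ d - 1) : ∃ n, u n = c := by
  induction c with
  | zero => exact ⟨0, hu.1⟩
  | succ c ih =>
    obtain ⟨n, hn⟩ := ih (by omega)
    exact ⟨P d u n + 1, by rw [u_P1 hu]; omega⟩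

lemma count_sl_le {a b a' b' : ℕ} (h0 : a' ≤ a) (h1 : a ≤ b) (h2 : b ≤ b') (i : ℕ) :
    (sl u a b).count i ≤ (sl u a' b').count i := by
  rw [sl_append u h0 (h1.trans h2), sl_append u h1 h2]
  simp only [List.count_append]; omega

lemma lext_ncard {w : List ℕ} {a b : ℕ} (hab : a ≠ b)
    (ha : IsFactorS (a :: w) u) (hb : IsFactorS (b :: w) u)
    (h : ∀ p, OccursAt w u (p + 1) → u p = a ∨ u p = b) : (Lext u w).ncard = 2 := by
  have : Lext u w = {a :: w, b :: w} := by
    ext x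
    simp only [Lext, Set.mem_setOf_eq, Set.mem_insert_iff, Set.mem_singleton_iff]
    constructor
    · rintro ⟨i, rfl, p, hp⟩
      rw [occ_cons] at hp
      rcases h p hp.2 with h | h
      · left; rw [← hp.1, h]
      · right; rw [← hp.1, h]
    · rintro (rfl | rfl)
      · exact ⟨a, rfl, ha⟩
      · exact ⟨b, rfl, hb⟩
  rw [this, Set.ncard_pair (by simpa using hab)]

lemma rext_ncard {w : List ℕ} {a b : ℕ} (hab : a ≠ b)
    (ha : IsFactorS (w ++ [a]) u) (hb : IsFactorS (w ++ [b]) u)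
    (h : ∀ p, OccursAt w u p → u (p + w.length) = a ∨ u (p + w.length) = b) :
    (Rext u w).ncard = 2 := by
  have : Rext u w = {w ++ [a], w ++ [b]} := by
    ext x
    simp only [Rext, Set.mem_setOf_eq, Set.mem_insert_iff, Set.mem_singleton_iff]
    constructor
    · rintro ⟨i, rfl, p, hp⟩
      rw [occ_append, occ_single] at hp
      rcases h p hp.1 with h | h
      · left; rw [← hp.2, h]
      · right; rw [← hp.2, h]
    · rintro (rfl | rfl)
      · exact ⟨a, rfl, ha⟩
      · exact ⟨b, rfl, hb⟩
  rw [this, Set.ncard_pair (by simpa using hab)]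

/-- The letter following `F_k (d-1)` in a block, `k ≥ 1`. -/
lemma after_w (hu : IsPhiFixed d u) (k n : ℕ) :
    (d - 1 = u n + (k + 1) → u ((P d u)^[k + 1] n + (Fword d (k + 1)).length + 1) = 0) ∧
    (d - 1 < u n + (k + 1) → u ((P d u)^[k + 1] n + (Fword d (k + 1)).length + 1) = d - 1) := by
  obtain ⟨h1, h2, h3⟩ := F_occ hu k n
  set m := (P d u)^[k] n + (Fword d k).length with hm
  have hle : (P d u)^[k] n ≤ m := by omega
  have hP := P_mono (d := d) (u := u).monotone hle
  have e : Fword d (k + 1) = sl u ((P d u)^[k + 1] n) (P d u m + 1) := by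
    rw [Fword, (occ_iff _ _ _).1 h1, ← hm, phiW_sl hu hle, Function.iterate_succ_apply',
      sl_succ u hP, u_P hu]
  have e2 : (P d u)^[k + 1] n + (Fword d (k + 1)).length = P d u m + 1 := by
    rw [e, sl_length, Function.iterate_succ_apply']; omega
  rw [e2]
  constructor
  · intro h
    have := u_P hu (m + 1)
    rwa [P_succ_lt (by omega)] at this
  · intro h
    exact u_P2 hu m (by omega)

end

lemma fmap_iter (d c i : ℕ) (h : c + i ≤ d - 2) :
    (fmap d)^[i] (0, ([] : List ℕ), c) = (i, Fword d i, c + i) := by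
  induction i with
  | zero => rfl
  | succ i ih =>
    rw [Function.iterate_succ_apply', ih (by omega), fmap]
    simp only [Fword]
    rw [if_neg (by omega), if_neg (by omega), Nat.mod_eq_of_lt (by omega),
      Nat.mod_eq_of_lt (by omega)]
    simp [add_assoc]

lemma w_last (d : ℕ) (hd : 3 ≤ d) :
    ((fmap d)^[d - 1] (Tinit d (d - 1 - (d - 1)))).2.1 =
      (d - 1) :: (Fword d (d - 1) ++ [d - 1]) := by
  obtain ⟨e, rfl⟩ := Nat.exists_eq_add_of_le' hd
  rw [Tinit, if_neg (by omega)]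
  have h1 : e + 3 - 1 = (e + 1) + 1 := by omega
  rw [show e + 3 - 1 - (e + 3 - 1) = 0 by omega, h1, Function.iterate_succ_apply',
    fmap_iter _ _ _ (by omega), fmap, Fword.eq_2 _ (e + 1)]
  simp

lemma w_lt (d k : ℕ) (hd : 3 ≤ d) (hk : k < d - 1) :
    ((fmap d)^[k] (Tinit d (d - 1 - k))).2.1 = Fword d k ++ [d - 1] := by
  cases k with
  | zero => simp [Tinit, Fword]
  | succ k =>
    rw [Tinit, if_neg (by omega), Function.iterate_succ_apply',
      fmap_iter _ _ _ (by omega), fmap, Fword]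
    simp only
    rw [if_neg (by omega), if_pos (by omega)]
    simp

lemma case_last (d : ℕ) (hd : 3 ≤ d) (u : ℕ → ℕ) (hu : IsPhiFixed d u) (w : List ℕ)
    (hw : w = (d - 1) :: (Fword d (d - 1) ++ [d - 1])) :
      (Lext u w).ncard = 2 ∧ (Rext u w).ncard = 2 ∧
      CompleteReturn u w (w ++ (phiW d)^[d - 1] [0]) ∧
      (∀ R : List ℕ, CompleteReturn u w R →
        parikh d (w ++ (phiW d)^[d - 1] [0]) ≤ parikh d R) := by
  have hocc : ∀ p, OccursAt w u p ↔ ∃ n, p + 1 = (P d u)^[d - 1] (n + 1) := by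
    intro p; rw [hw]; exact occ_w' hd hu p
  have hlen : w.length = (Fword d (d - 1)).length + 2 := by simp [hw]
  have hphi : (phiW d)^[d - 1] [0] = Fword d (d - 1) ++ [d - 1] := by
    have := phi_iter_single d 0 (d - 1) (by omega)
    simpa using this
  have hd2 : d - 1 = (d - 2) + 1 := by omega
  -- value of u at 1
  have hu1 : u 1 = 1 := by
    have := u_P1 hu 0
    rw [P_zero, hu.1] at this
    simp at this; omega
  -- second-to-last letters
  have left_ex : ∀ n, ∃ p, OccursAt w u (p + 1) ∧
      ((u n = 0 → u p = 0) ∧ (1 ≤ u n → u p = d - 1)) := by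
    intro n
    obtain ⟨m, h1, h2⟩ := last_letter hu (d - 2) n
    have h3 : (P d u)^[d - 1] (n + 1) = P d u (m + 1) := by
      rw [hd2, Function.iterate_succ_apply', h1]
    by_cases hm : u m < d - 1
    · refine ⟨P d u m, (hocc _).2 ⟨n, ?_⟩, fun _ => u_P hu m, fun h => ?_⟩
      · rw [h3, P_succ_lt hm]
      · omega
    · refine ⟨P d u m + 1, (hocc _).2 ⟨n, ?_⟩, fun h => ?_, fun _ => ?_⟩
      · rw [h3, P_succ_ge hm]
      · omega
      · rw [u_P1 hu]; omega
  have right_ex : ∀ n, 1 ≤ n → ∃ p, OccursAt w u p ∧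
      ((u n = 0 → u (p + w.length) = 0) ∧ (1 ≤ u n → u (p + w.length) = d - 1)) := by
    intro n hn
    obtain ⟨n, rfl⟩ := Nat.exists_eq_add_of_le' hn
    obtain ⟨m, h1, h2⟩ := last_letter hu (d - 1) n
    have ha := after_w hu (d - 2) (n + 1)
    rw [← hd2, h1] at ha
    have e : m + w.length = m + 1 + (Fword d (d - 1)).length + 1 := by omega
    refine ⟨m, (hocc m).2 ⟨n, h1.symm⟩, fun h => ?_, fun h => ?_⟩
    · rw [e]; exact ha.1 (by omega)
    · rw [e]; exact ha.2 (by omega)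
  have hu2 : u (P d u 1) = 0 := u_P hu 1
  have hP1 : 1 ≤ P d u 1 := by have := P_succ_two (d := d) (u := u) 0; simp at this; omega
  refine ⟨?_, ?_, ?_, ?_⟩
  · apply lext_ncard (a := 0) (b := d - 1) (by omega)
    · obtain ⟨p, h1, h2, _⟩ := left_ex 0
      exact ⟨p, (occ_cons _ _ _ _).2 ⟨h2 hu.1, h1⟩⟩
    · obtain ⟨p, h1, _, h2⟩ := left_ex 1
      exact ⟨p, (occ_cons _ _ _ _).2 ⟨h2 (by omega), h1⟩⟩
    · intro p hp
      rw [hw, occ_cons] at hp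
      exact prev_letter hd hu (by omega)
  · apply rext_ncard (a := 0) (b := d - 1) (by omega)
    · obtain ⟨p, h1, h2, _⟩ := right_ex (P d u 1) hP1
      exact ⟨p, (occ_append _ _ _ _).2 ⟨h1, (occ_single _ _ _).2 (h2 hu2)⟩⟩
    · obtain ⟨p, h1, _, h2⟩ := right_ex 1 le_rfl
      exact ⟨p, (occ_append _ _ _ _).2 ⟨h1, (occ_single _ _ _).2 (h2 (by omega))⟩⟩
    · intro p hp
      rw [hw, occ_cons, occ_append, occ_single] at hp
      have e : p + w.length = p + 1 + (Fword d (d - 1)).length + 1 := by omega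
      rw [e]
      exact next_letter hd hu (by omega)
  · obtain ⟨n, hn⟩ := Nat.exists_eq_add_of_le' hP1
    rw [hn] at hu2
    obtain ⟨m, h1, h2⟩ := last_letter hu (d - 1) n
    obtain ⟨m', h1', h2'⟩ := last_letter hu (d - 1) (n + 1)
    have hmm := Pk_mono (d := d) (u := u) (d - 1) (Nat.lt_succ_self (n + 1))
    have hs := phiWk_sl hu (d - 1) (Nat.le_succ (n + 1))
    simp only [Nat.succ_eq_add_one] at hmm hs
    rw [sl_one, hu2, hphi, h1', h1, sl_succ u (by omega)] at hs
    have hF : Fword d (d - 1) = sl u (m + 1) m' := (List.append_inj' hs rfl).1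
    refine ⟨(d - 1) :: Fword d (d - 1), ⟨m, m', by omega, (hocc _).2 ⟨n, h1.symm⟩,
      (hocc _).2 ⟨n + 1, h1'.symm⟩, ?_, ?_⟩, ?_⟩
    · intro q hq1 hq2 hq
      obtain ⟨t, ht⟩ := (hocc q).1 hq
      have a1 := (Pk_mono (d := d) (u := u) (d - 1)).lt_iff_lt (a := n + 1) (b := t + 1)
      have a2 := (Pk_mono (d := d) (u := u) (d - 1)).lt_iff_lt (a := t + 1) (b := n + 1 + 1)
      omega
    · change _ = sl u m m'
      rw [sl_cons u (by omega), ← hF]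
      congr 1; omega
    · rw [hphi, hw]; simp
  · rintro R ⟨r, ⟨j, l, hjl, hj, hl, _, hr⟩, rfl⟩ i
    obtain ⟨n, hn⟩ := (hocc j).1 hj
    obtain ⟨m, hm⟩ := (hocc l).1 hl
    have a1 := (Pk_mono (d := d) (u := u) (d - 1)).lt_iff_lt (a := n + 1) (b := m + 1)
    have a2 := (Pk_mono (d := d) (u := u) (d - 1)).monotone (a := n + 1 + 1) (b := m + 1) (by omega)
    obtain ⟨h1, h2, h3⟩ := F_occ hu (d - 1) (n + 1)
    rw [← hn] at h1 h2 h3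
    have hr' : r = sl u j l := hr
    have huj : u j = d - 1 := by rw [hw, occ_cons] at hj; exact hj.1
    have hc : (sl u j (j + 1 + (Fword d (d - 1)).length)).count (i : ℕ) ≤ r.count (i : ℕ) := by
      rw [hr']; exact count_sl_le le_rfl (by omega) (by omega) _
    rw [sl_cons u (by omega), ← (occ_iff _ _ _).1 h1, huj] at hc
    simp only [parikh, hphi, List.count_append]
    rw [List.count_cons] at hc
    rw [List.count_singleton]
    omega

lemma case_lt (d : ℕ) (hd : 3 ≤ d) (u : ℕ → ℕ) (hu : IsPhiFixed d u) (k : ℕ) (hk : k < d - 1)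
    (w : List ℕ) (hw : w = Fword d k ++ [d - 1]) :
      (Lext u w).ncard = 2 ∧ (Rext u w).ncard = 2 ∧
      CompleteReturn u w ((phiW d)^[k] [d - 1] ++ w) ∧
      CompleteReturn u w (w ++ (phiW d)^[d - 1] [0]) ∧
      (∀ R : List ℕ, CompleteReturn u w R →
        parikh d ((phiW d)^[k] [d - 1] ++ w) ≤ parikh d R ∨
        parikh d (w ++ (phiW d)^[d - 1] [0]) ≤ parikh d R) := by
  have hocc : ∀ p, OccursAt w u p ↔ ∃ n, p = (P d u)^[k] n ∧ d - 1 ≤ u n + k := by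
    intro p; rw [hw]; exact occ_w hd hu k hk.le p
  have hlen : w.length = (Fword d k).length + 1 := by simp [hw]
  obtain ⟨J, hJ⟩ : ∃ J, J + k = d - 1 := ⟨d - 1 - k, by omega⟩
  have hphiJ : (phiW d)^[k] [J] = w := by
    rw [phi_iter_single d J k (by omega), hw, hJ]
  have hphi : (phiW d)^[d - 1] [0] = (phiW d)^[k] (Fword d J) ++ w := by
    rw [← hJ, add_comm, Function.iterate_add_apply, phi_iter_single d 0 J (by omega),
      phiW_iter_append, zero_add, hphiJ]
  -- double letter d-1
  obtain ⟨n0, hn0⟩ := exists_letter hu (d - 1) le_rfl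
  have hb0 : u (P d u n0) = 0 := u_P hu n0
  have hb1 : u (P d u n0 + 1) = d - 1 := by rw [u_P1 hu]; omega
  have hb2 : u (P d u n0 + 1 + 1) = d - 1 := u_P2 hu n0 (by omega)
  have hb3 : u (P d u n0 + 1 + 1 + 1) = 0 := by
    have := u_P hu (n0 + 1)
    rwa [P_succ_ge (by omega)] at this
  have left_ex : ∀ n, u (n + 1) = d - 1 → ∃ p, OccursAt w u (p + 1) ∧ u p = min (u n + k) (d - 1) := by
    intro n hn
    obtain ⟨m, h1, h2⟩ := last_letter hu k n
    exact ⟨m, (hocc _).2 ⟨n + 1, h1.symm, by omega⟩, h2⟩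
  refine ⟨?_, ?_, ?_, ?_, ?_⟩
  · apply lext_ncard (a := k) (b := d - 1) (by omega)
    · obtain ⟨p, h1, h2⟩ := left_ex _ hb1
      exact ⟨p, (occ_cons _ _ _ _).2 ⟨by omega, h1⟩⟩
    · obtain ⟨p, h1, h2⟩ := left_ex _ hb2
      exact ⟨p, (occ_cons _ _ _ _).2 ⟨by omega, h1⟩⟩
    · intro p hp
      obtain ⟨n, hn, hn2⟩ := (hocc _).1 hp
      cases n with
      | zero =>
        have := hu.1
        omega
      | succ n =>
        obtain ⟨m, h1, h2⟩ := last_letter hu k n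
        obtain rfl : p = m := by omega
        have := prev_letter hd hu (p := n) (by omega)
        omega
  · have right : ∃ p q, OccursAt w u p ∧ OccursAt w u q ∧ u (p + w.length) = 0 ∧
        u (q + w.length) = d - 1 := by
      cases k with
      | zero =>
        have e : w.length = 1 := by simp [hlen, Fword]
        refine ⟨P d u n0 + 1 + 1, P d u n0 + 1, (hocc _).2 ⟨_, rfl, by omega⟩,
          (hocc _).2 ⟨_, rfl, by omega⟩, ?_, ?_⟩
        · rw [e]; exact hb3
        · rw [e]; exact hb2
      | succ k =>
        obtain ⟨x, hx⟩ := exists_letter hu J (by omega)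
        refine ⟨(P d u)^[k + 1] x, (P d u)^[k + 1] n0, (hocc _).2 ⟨_, rfl, by omega⟩,
          (hocc _).2 ⟨_, rfl, by omega⟩, ?_, ?_⟩
        · rw [hlen, ← add_assoc]; exact (after_w hu k x).1 (by omega)
        · rw [hlen, ← add_assoc]; exact (after_w hu k n0).2 (by omega)
    obtain ⟨p, q, hp, hq, hp2, hq2⟩ := right
    apply rext_ncard (a := 0) (b := d - 1) (by omega)
    · exact ⟨p, (occ_append _ _ _ _).2 ⟨hp, (occ_single _ _ _).2 hp2⟩⟩
    · exact ⟨q, (occ_append _ _ _ _).2 ⟨hq, (occ_single _ _ _).2 hq2⟩⟩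
    · intro p hp
      rw [hw, occ_append, occ_single] at hp
      rw [hlen, ← add_assoc]
      exact next_letter hd hu (by omega)
  · set n := P d u n0 + 1
    refine ⟨_, ⟨(P d u)^[k] n, (P d u)^[k] (n + 1), Pk_mono k (Nat.lt_succ_self n),
      (hocc _).2 ⟨n, rfl, by omega⟩, (hocc _).2 ⟨n + 1, rfl, by omega⟩, ?_, ?_⟩, rfl⟩
    · intro q h1 h2 hq
      obtain ⟨t, rfl, ht⟩ := (hocc q).1 hq
      rw [(Pk_mono k).lt_iff_lt] at h1 h2
      omega
    · change _ = sl u _ _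
      rw [← phiWk_sl hu k (Nat.le_succ n), sl_one, hb1]
  · obtain ⟨n, h1, h2⟩ := last_letter hu J 0
    rw [hu.1] at h2
    obtain ⟨g1, g2, _⟩ := F_occ hu J 1
    rw [zero_add] at h1
    rw [h1] at g1 g2
    have hlet := Fword_letters d J (by omega)
    set m := n + 1 + (Fword d J).length with hm
    have hF : Fword d J = sl u (n + 1) m := (occ_iff _ _ _).1 g1
    refine ⟨w ++ (phiW d)^[k] (Fword d J), ⟨(P d u)^[k] n, (P d u)^[k] m,
      Pk_mono k (by omega), (hocc _).2 ⟨n, rfl, by omega⟩, (hocc _).2 ⟨m, rfl, by omega⟩, ?_, ?_⟩,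
      by rw [hphi, List.append_assoc]⟩
    · intro q h3 h4 hq
      obtain ⟨t, rfl, ht⟩ := (hocc q).1 hq
      rw [(Pk_mono k).lt_iff_lt] at h3 h4
      have : u t ∈ Fword d J := by
        rw [hF, sl_append u (by omega : n + 1 ≤ t) h4.le, sl_cons u h4]; simp
      have := hlet _ this
      omega
    · change _ = sl u _ _
      rw [← phiWk_sl hu k (by omega), sl_cons u (by omega), ← hF,
        phiW_iter_cons, ← hphiJ]
      congr 3
      omega
  · rintro R ⟨r, ⟨j, l, hjl, hj, hl, hno, hr⟩, rfl⟩
    obtain ⟨n, rfl, hn⟩ := (hocc j).1 hj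
    obtain ⟨m, rfl, hm⟩ := (hocc l).1 hl
    rw [(Pk_mono k).lt_iff_lt] at hjl
    have hr' : r = sl u _ _ := hr
    rw [← phiWk_sl hu k hjl.le] at hr'
    have hle := u_le hu n
    by_cases hnd : u n = d - 1
    · left
      intro i
      rw [hr', sl_cons u hjl, phiW_iter_cons d k (u n), hnd]
      simp only [parikh, List.count_append]
      omega
    · right
      intro i
      obtain ⟨s, hs⟩ := block_start hu J n (by omega) (by omega)
      obtain ⟨g1, g2, _⟩ := F_occ hu J s
      rw [← hs] at g1 g2
      have hlet := Fword_letters d J (by omega)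
      set m' := n + 1 + (Fword d J).length with hm'
      have hF : Fword d J = sl u (n + 1) m' := (occ_iff _ _ _).1 g1
      have hmm : m' ≤ m := by
        by_contra hlt
        push Not at hlt
        have : u m ∈ Fword d J := by
          rw [hF, sl_append u (by omega : n + 1 ≤ m) hlt.le, sl_cons u hlt]; simp
        have := hlet _ this
        omega
      have hwn : w.count (i : ℕ) ≤ ((phiW d)^[k] [u n]).count (i : ℕ) := by
        rw [← sl_one, phiWk_sl hu k (Nat.le_succ n), (occ_iff _ _ _).1 hj]
        apply count_sl_le le_rfl (by omega)
        have := (F_occ hu k n).2.2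
        rw [Nat.succ_eq_add_one]
        omega
      rw [hr', sl_cons u hjl, phiW_iter_cons d k (u n), sl_append u (by omega : n + 1 ≤ m') hmm,
        ← hF, phiW_iter_append, hphi]
      simp only [parikh, List.count_append]
      omega

/-- Let `d ≥ 3`, `k ≤ d−1`, and let `w` be the middle component of
`f^k(T_{d−1−k})`. If `k = d−1`, then `w = (d−1)F_{d−1}(d−1)`, `w` has exactly two left
and two right extensions, `B = w·φ^{d−1}(0)` is a complete return word to `w`, and every
complete return word `R` to `w` satisfies `R⃗ ≥ B⃗`. If `k < d−1`, then `w = F_k(d−1)`,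
`w` has exactly two left and two right extensions, `A = φ^k(d−1)·w` and `B = w·φ^{d−1}(0)`
are complete return words to `w`, and every complete return word `R` to `w` satisfies
`R⃗ ≥ A⃗` or `R⃗ ≥ B⃗`. -/
theorem statement16 (d : ℕ) (hd : 3 ≤ d) (u : ℕ → ℕ) (hu : IsPhiFixed d u)
    (k : ℕ) (hk : k ≤ d - 1) (w : List ℕ)
    (hw : w = ((fmap d)^[k] (Tinit d (d - 1 - k))).2.1) :
    (k = d - 1 →
      w = (d - 1) :: (Fword d (d - 1) ++ [d - 1]) ∧
      (Lext u w).ncard = 2 ∧ (Rext u w).ncard = 2 ∧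
      CompleteReturn u w (w ++ (phiW d)^[d - 1] [0]) ∧
      (∀ R : List ℕ, CompleteReturn u w R →
        parikh d (w ++ (phiW d)^[d - 1] [0]) ≤ parikh d R)) ∧
    (k < d - 1 →
      w = Fword d k ++ [d - 1] ∧
      (Lext u w).ncard = 2 ∧ (Rext u w).ncard = 2 ∧
      CompleteReturn u w ((phiW d)^[k] [d - 1] ++ w) ∧
      CompleteReturn u w (w ++ (phiW d)^[d - 1] [0]) ∧
      (∀ R : List ℕ, CompleteReturn u w R →
        parikh d ((phiW d)^[k] [d - 1] ++ w) ≤ parikh d R ∨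
        parikh d (w ++ (phiW d)^[d - 1] [0]) ≤ parikh d R)) := by
  constructor
  · rintro rfl
    have hw' := hw.trans (w_last d hd)
    exact ⟨hw', case_last d hd u hu w hw'⟩
  · intro hk'
    have hw' := hw.trans (w_lt d k hd hk')
    exact ⟨hw', case_lt d hd u hu k hk' w hw'⟩

end RichRT
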